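/- The automorphism group of the graph Ξ_I is isomorphic to the alternating group A₄ on 4 letters. -/

import Mathlib

/-- The ten faces of the hemi-icosahedron on vertex set `Fin 6`. -/
def faces : Finset (Finset (Fin 6)) :=
  {{0,1,2}, {0,2,3}, {0,3,4}, {0,4,5}, {0,5,1}, {1,2,4}, {2,3,5}, {1,3,4}, {2,4,5}, {1,3,5}}

/-- The 16-element vertex set: `Fin 6` together with the ten faces. -/
abbrev V16 := Fin 6 ⊕ {f : Finset (Fin 6) // f ∈ faces}

/-- Vertex-face incidence: `v : Fin 6` is incident to a face `f` iff `v ∈ f`. -/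
def piRel : V16 → V16 → Prop := fun a b =>
  match a, b with
  | Sum.inl v, Sum.inr f => v ∈ f.1
  | _, _ => False

instance : DecidableRel piRel := fun a b =>
  match a, b with
  | Sum.inl v, Sum.inr f => inferInstanceAs (Decidable (v ∈ f.1))
  | Sum.inl _, Sum.inl _ => Decidable.isFalse id
  | Sum.inr _, Sum.inl _ => Decidable.isFalse id
  | Sum.inr _, Sum.inr _ => Decidable.isFalse id

/-- `Π_I`, the projective vertex-face graph of the icosahedron (vertex-face graph of
the hemi-icosahedron): `v : Fin 6` is adjacent to `f ∈ faces` iff `v ∈ f`. -/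
def piI : SimpleGraph V16 := SimpleGraph.fromRel piRel

instance : DecidableRel piI.Adj := fun a b =>
  decidable_of_iff _ (SimpleGraph.fromRel_adj piRel a b).symm

/-- The relation of `Π_I` together with the three extra edges `{1,3}`, `{0,2}`, `{4,5}`. -/
def xiRel : V16 → V16 → Prop := fun a b =>
  match a, b with
  | Sum.inl v, Sum.inr f => v ∈ f.1
  | Sum.inl v, Sum.inl w => (v = 1 ∧ w = 3) ∨ (v = 0 ∧ w = 2) ∨ (v = 4 ∧ w = 5)
  | _, _ => False

instance : DecidableRel xiRel := fun a b =>
  match a, b with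
  | Sum.inl v, Sum.inr f => inferInstanceAs (Decidable (v ∈ f.1))
  | Sum.inl v, Sum.inl w =>
      inferInstanceAs (Decidable ((v = 1 ∧ w = 3) ∨ (v = 0 ∧ w = 2) ∨ (v = 4 ∧ w = 5)))
  | Sum.inr _, Sum.inl _ => Decidable.isFalse id
  | Sum.inr _, Sum.inr _ => Decidable.isFalse id

/-- `Ξ_I`: the graph `Π_I` with the three extra edges `{1,3}`, `{0,2}`, `{4,5}` added. -/
def xiI : SimpleGraph V16 := SimpleGraph.fromRel xiRel

instance : DecidableRel xiI.Adj := fun a b =>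
  decidable_of_iff _ (SimpleGraph.fromRel_adj xiRel a b).symm

/-!
Points and faces have different degrees in `Ξ_I`, so its automorphisms are the permutations of the
six points that preserve the faces and the three extra edges. Four of the faces contain no extra
edge, and each point lies on exactly two of these: the six points become the edges of a tetrahedron
whose vertices are the four faces, and the extra edges join opposite edges of the tetrahedron. Hence
the automorphisms come from permutations of the four faces. The remaining six faces amount to a
cyclic order of the three extra edges, which only the even permutations preserve.
-/

open Equiv MulAction
open scoped Pointwise

section IncidenceGraph

variable {α : Type*}

/-- The graph on the points and blocks of a set system `F` whose edges are those of a given graph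
`G` on the points together with all incidences `v ∈ f`. It is the vertex-face graph of `F` when
`G = ⊥`. -/
def incidenceGraph (G : SimpleGraph α) (F : Finset (Finset α)) :
    SimpleGraph (α ⊕ {f // f ∈ F}) where
  Adj
    | .inl v, .inl w => G.Adj v w
    | .inl v, .inr f => v ∈ f.1
    | .inr f, .inl v => v ∈ f.1
    | .inr _, .inr _ => False
  symm := ⟨by rintro (v | e) (w | f) h <;> first | exact h | exact h.symm⟩
  loopless := ⟨by rintro (v | f) h <;> first | exact h | exact h.ne rfl⟩

variable [DecidableEq α] {G : SimpleGraph α} {F : Finset (Finset α)}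

/-- The permutations of the points that are automorphisms of the graph `G` and of the set
system `F`. -/
def systemAut (G : SimpleGraph α) (F : Finset (Finset α)) : Subgroup (Perm α) where
  carrier := {σ | (∀ v w, G.Adj (σ v) (σ w) ↔ G.Adj v w) ∧ σ ∈ stabilizer (Perm α) F}
  one_mem' := ⟨fun _ _ => Iff.rfl, one_mem _⟩
  mul_mem' hσ hρ := ⟨fun _ _ => (hσ.1 _ _).trans (hρ.1 _ _), mul_mem hσ.2 hρ.2⟩
  inv_mem' {σ} hσ := ⟨fun v w => by simpa using (hσ.1 (σ⁻¹ v) (σ⁻¹ w)).symm, inv_mem hσ.2⟩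

/-- Automorphisms of `G` and `F` act on the incidence graph, through their action on points and
the induced action on blocks. -/
def systemAutToIso : systemAut G F →* (incidenceGraph G F ≃g incidenceGraph G F) where
  toFun σ :=
    { toEquiv := sumCongr σ.1 ((toPerm σ.1).subtypePerm (mem_stabilizer_finset.1 σ.2.2))
      map_rel_iff' := by
        rintro (v | e) (w | f)
        · exact σ.2.1 v w
        · exact Finset.smul_mem_smul_finset_iff σ.1
        · exact Finset.smul_mem_smul_finset_iff σ.1
        · exact Iff.rfl }
  map_one' := by
    ext (v | f)
    · rfl
    · exact congrArg Sum.inr (Subtype.ext (one_smul (Perm α) f.1))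
  map_mul' σ ρ := by
    ext (v | f)
    · rfl
    · exact congrArg Sum.inr (Subtype.ext (mul_smul σ.1 ρ.1 f.1))

lemma systemAutToIso_injective : Function.Injective (systemAutToIso (G := G) (F := F)) := by
  intro σ ρ h
  ext v
  exact Sum.inl_injective (DFunLike.congr_fun h (Sum.inl v))

lemma systemAutToIso_surjective [Finite α]
    (h : ∀ (φ : incidenceGraph G F ≃g incidenceGraph G F) v f, φ (.inl v) ≠ .inr f) :
    Function.Surjective (systemAutToIso (G := G) (F := F)) := by
  intro φ
  have maps_inl : Set.MapsTo φ.toEquiv (Set.range Sum.inl) (Set.range Sum.inl) := by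
    rintro _ ⟨v, rfl⟩
    rcases hv : φ (.inl v) with w | f
    · exact ⟨w, rfl⟩
    · exact absurd hv (h φ v f)
  obtain ⟨⟨σ, ρ⟩, hφ⟩ := Perm.mem_sumCongrHom_range_of_perm_mapsTo_inl maps_inl
  have apply_inl (v) : φ (.inl v) = .inl (σ v) := (DFunLike.congr_fun hφ (Sum.inl v)).symm
  have apply_inr (f) : φ (.inr f) = .inr (ρ f) := (DFunLike.congr_fun hφ (Sum.inr f)).symm
  have adj_iff (v w) : G.Adj (σ v) (σ w) ↔ G.Adj v w := by
    have := φ.map_adj_iff (v := .inl v) (w := .inl w)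
    rwa [apply_inl, apply_inl] at this
  have mem_iff (v f) : σ v ∈ (ρ f).1 ↔ v ∈ f.1 := by
    have := φ.map_adj_iff (v := .inl v) (w := .inr f)
    rwa [apply_inl, apply_inr] at this
  have smul_block (f) : σ • f.1 = (ρ f).1 := by
    ext v
    obtain ⟨u, rfl⟩ := σ.surjective v
    exact (Finset.smul_mem_smul_finset_iff σ).trans (mem_iff u f).symm
  have mem_stabilizer : σ ∈ stabilizer (Perm α) F :=
    mem_stabilizer_finset'.2 fun f hf => smul_block ⟨f, hf⟩ ▸ (ρ ⟨f, hf⟩).2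
  refine ⟨⟨σ, adj_iff, mem_stabilizer⟩, ?_⟩
  ext (v | f)
  · exact (apply_inl v).symm
  · exact (congrArg Sum.inr (Subtype.ext (smul_block f))).trans (apply_inr f).symm

/-- The isomorphism of the automorphisms of `G` and `F` with those of the incidence graph, valid
when the latter never send a point to a block. -/
noncomputable def systemAutEquivIso [Finite α]
    (h : ∀ (φ : incidenceGraph G F ≃g incidenceGraph G F) v f, φ (.inl v) ≠ .inr f) :
    systemAut G F ≃* (incidenceGraph G F ≃g incidenceGraph G F) :=
  .ofBijective systemAutToIso ⟨systemAutToIso_injective, systemAutToIso_surjective h⟩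

end IncidenceGraph

lemma exists_perm_comp_eq {ι X : Type*} [Finite ι] {T : ι → X} (hT : Function.Injective T)
    {g : X → X} (hg : Function.Injective g) (hgT : ∀ i, ∃ j, g (T i) = T j) :
    ∃ τ : Perm ι, g ∘ T = T ∘ τ := by
  choose t ht using hgT
  have gT_eq : g ∘ T = T ∘ t := funext ht
  have t_injective : Function.Injective t := .of_comp (f := T) (gT_eq ▸ hg.comp hT)
  exact ⟨.ofBijective t (Finite.injective_iff_bijective.1 t_injective), gT_eq⟩

/-- The graph on the vertices of the hemi-icosahedron formed by the three extra edges of `Ξ_I`. -/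
def extraEdges : SimpleGraph (Fin 6) :=
  .fromEdgeSet {s(1, 3), s(0, 2), s(4, 5)}

instance : DecidableRel extraEdges.Adj :=
  inferInstanceAs (DecidableRel (SimpleGraph.fromEdgeSet _).Adj)

lemma xiI_eq_incidenceGraph : xiI = incidenceGraph extraEdges faces := by
  ext (v | e) (w | f)
  · change xiI.Adj (.inl v) (.inl w) ↔ extraEdges.Adj v w
    revert v w
    decide
  all_goals simp [xiI, xiRel, incidenceGraph]

lemma xiI_degree_inl : ∀ v, xiI.degree (.inl v) = 6 := by decide +kernel

lemma xiI_degree_inr : ∀ f, xiI.degree (.inr f) = 3 := by decide +kernel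

lemma xiI_iso_apply_inl_ne_inr (φ : xiI ≃g xiI) (v : Fin 6) (f : {f // f ∈ faces}) :
    φ (.inl v) ≠ .inr f := by
  intro h
  have := φ.degree_eq (.inl v)
  rw [h, xiI_degree_inl, xiI_degree_inr] at this
  omega

/-- The four faces that contain none of the extra edges. Every vertex lies on exactly two of them,
so they can be taken as the vertices of a tetrahedron whose edges are the elements of `Fin 6`. -/
def transversalFace : Fin 4 → Finset (Fin 6) :=
  ![{0, 3, 4}, {0, 1, 5}, {1, 2, 4}, {2, 3, 5}]

lemma transversalFace_injective : Function.Injective transversalFace := by decide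

lemma exists_eq_transversalFace_iff : ∀ f, (∃ i, f = transversalFace i) ↔
    f ∈ faces ∧ ∀ v ∈ f, ∀ w ∈ f, ¬ extraEdges.Adj v w := by
  decide +kernel

/-- The edge of the tetrahedron represented by a vertex of the hemi-icosahedron. -/
def tetrahedronEdge (v : Fin 6) : Set.powersetCard (Fin 4) 2 :=
  ⟨({i | v ∈ transversalFace i} : Finset (Fin 4)),
    Set.powersetCard.mem_iff.2 (by revert v; decide)⟩

lemma mem_tetrahedronEdge {i : Fin 4} {v : Fin 6} :
    i ∈ (tetrahedronEdge v).1 ↔ v ∈ transversalFace i := by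
  simp [tetrahedronEdge]

lemma tetrahedronEdge_bijective : Function.Bijective tetrahedronEdge := by
  have edge_injective : Function.Injective tetrahedronEdge := by decide
  refine edge_injective.bijective_of_nat_card_le ?_
  rw [Set.powersetCard.card, Nat.card_fin, Nat.card_fin]
  decide

/-- `tetrahedronEdge` as an equivalence. Its inverse is computable, so that `edgePerm` below can be
evaluated by `decide`. -/
def tetrahedronEdgeEquiv : Fin 6 ≃ Set.powersetCard (Fin 4) 2 where
  toFun := tetrahedronEdge
  invFun := Fintype.bijInv tetrahedronEdge_bijective
  left_inv := Fintype.leftInverse_bijInv _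
  right_inv := Fintype.rightInverse_bijInv _

/-- The action of the permutations of the vertices of the tetrahedron on its edges. -/
def edgePerm : Perm (Fin 4) →* Perm (Fin 6) :=
  tetrahedronEdgeEquiv.symm.permCongrHom.toMonoidHom.comp
    (toPermHom (Perm (Fin 4)) (Set.powersetCard (Fin 4) 2))

lemma tetrahedronEdge_edgePerm (τ : Perm (Fin 4)) (v : Fin 6) :
    tetrahedronEdge (edgePerm τ v) = τ • tetrahedronEdge v :=
  tetrahedronEdgeEquiv.apply_symm_apply _

lemma edgePerm_injective : Function.Injective edgePerm := by
  have : FaithfulSMul (Perm (Fin 4)) (Set.powersetCard (Fin 4) 2) :=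
    Set.powersetCard.faithfulSMul (by norm_num) (by norm_num)
  exact tetrahedronEdgeEquiv.symm.permCongrHom.injective.comp toPerm_injective

lemma extraEdges_adj_iff_disjoint : ∀ v w, extraEdges.Adj v w ↔
    Disjoint (tetrahedronEdge v).1 (tetrahedronEdge w).1 := by
  decide

lemma extraEdges_adj_edgePerm (τ : Perm (Fin 4)) (v w : Fin 6) :
    extraEdges.Adj (edgePerm τ v) (edgePerm τ w) ↔ extraEdges.Adj v w := by
  simp only [extraEdges_adj_iff_disjoint, tetrahedronEdge_edgePerm, Set.powersetCard.coe_smul,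
    Finset.smul_finset_def]
  exact Finset.disjoint_image (MulAction.injective τ)

/- Every `τ` permutes the transversal faces. The other six faces are the unions of an extra edge
with an endpoint of the next one in the cyclic order `{0,2}`, `{1,3}`, `{4,5}`, whence the
parity. -/
lemma edgePerm_mem_stabilizer_faces_iff : ∀ τ : Perm (Fin 4),
    edgePerm τ ∈ stabilizer (Perm (Fin 6)) faces ↔ Perm.sign τ = 1 := by
  simp only [mem_stabilizer_finset']
  decide +kernel

lemma exists_smul_transversalFace_eq {σ : Perm (Fin 6)} (hσ : σ ∈ systemAut extraEdges faces)
    (i : Fin 4) : ∃ j, σ • transversalFace i = transversalFace j := by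
  obtain ⟨mem_faces, not_adj⟩ := (exists_eq_transversalFace_iff (transversalFace i)).1 ⟨i, rfl⟩
  refine (exists_eq_transversalFace_iff _).2 ⟨mem_stabilizer_finset'.1 hσ.2 mem_faces, ?_⟩
  intro v hv w hw
  obtain ⟨v', hv', rfl⟩ := Finset.mem_smul_finset.1 hv
  obtain ⟨w', hw', rfl⟩ := Finset.mem_smul_finset.1 hw
  exact (hσ.1 v' w').not.2 (not_adj v' hv' w' hw')

lemma exists_edgePerm_eq {σ : Perm (Fin 6)} (hσ : σ ∈ systemAut extraEdges faces) :
    ∃ τ, edgePerm τ = σ := by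
  obtain ⟨τ, hτ⟩ := exists_perm_comp_eq transversalFace_injective (MulAction.injective σ)
    (exists_smul_transversalFace_eq hσ)
  have smul_transversalFace (i) : σ • transversalFace i = transversalFace (τ i) := congrFun hτ i
  have tetrahedronEdge_apply (v) : tetrahedronEdge (σ v) = τ • tetrahedronEdge v := by
    ext i
    obtain ⟨j, rfl⟩ := τ.surjective i
    rw [mem_tetrahedronEdge, ← smul_transversalFace, Set.powersetCard.coe_smul, ← Perm.smul_def,
      ← Perm.smul_def, Finset.smul_mem_smul_finset_iff, Finset.smul_mem_smul_finset_iff,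
      mem_tetrahedronEdge]
  refine ⟨τ, Equiv.ext fun v => tetrahedronEdge_bijective.1 ?_⟩
  rw [tetrahedronEdge_edgePerm, tetrahedronEdge_apply]

lemma systemAut_eq_map_alternatingGroup :
    systemAut extraEdges faces = (alternatingGroup (Fin 4)).map edgePerm := by
  ext σ
  constructor
  · intro hσ
    obtain ⟨τ, rfl⟩ := exists_edgePerm_eq hσ
    exact ⟨τ, (edgePerm_mem_stabilizer_faces_iff τ).1 hσ.2, rfl⟩
  · rintro ⟨τ, hτ, rfl⟩
    exact ⟨extraEdges_adj_edgePerm τ, (edgePerm_mem_stabilizer_faces_iff τ).2 hτ⟩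

/-- The automorphism group of `Ξ_I` is isomorphic to the alternating group `A₄`. -/
theorem stmt_1 : Nonempty ((xiI ≃g xiI) ≃* alternatingGroup (Fin 4)) := by
  have apply_inl_ne_inr := xiI_iso_apply_inl_ne_inr
  rw [xiI_eq_incidenceGraph] at apply_inl_ne_inr ⊢
  exact ⟨(systemAutEquivIso apply_inl_ne_inr).symm.trans <|
    (MulEquiv.subgroupCongr systemAut_eq_map_alternatingGroup).trans
      ((alternatingGroup (Fin 4)).equivMapOfInjective edgePerm edgePerm_injective).symm⟩
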